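/- arXiv:math/0311215 — 2 statements merged into one kernel-verified Lean document; each statement's English description precedes it below -/
import Mathlib

section
/- Along the cycle chart, the coefficients of the first fundamental form satisfy, for every u: E(u,0) = 1, F(u,0) = 0, G(u,0) = 1, ∂E/∂v(u,0) = −2k_g(u), ∂F/∂v(u,0) = 0 and ∂G/∂v(u,0) = 0. -/
/-! Since the `N` and `B` components of the chart vanish to second order in `v`, it has the form
`α(u,v) = c(u) + v T(u) + v² W(u,v)` with `W` smooth and `W ∈ span(N, B)`. Hence
`α_u = t + v T' + v² W_u` and `α_v = T + 2v W + v² W_v`, so that along `v = 0` one has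
`α_u = t`, `α_v = T`, `α_uv = T'`, `α_vv = 2W` (`pdu_expansion`, `pdv_expansion`). The product rule
expresses the derivatives of `E`, `F`, `G` by inner products of these four vectors, which the
Darboux equation for `T'` and the orthonormality of the frame evaluate. -/

noncomputable section

open scoped RealInnerProductSpace

abbrev E4 : Type := EuclideanSpace ℝ (Fin 4)

/-- Partial derivative with respect to the first variable `u`. -/
def pdu {X : Type*} [NormedAddCommGroup X] [NormedSpace ℝ X]
    (f : ℝ × ℝ → X) (p : ℝ × ℝ) : X := fderiv ℝ f p (1, 0)

/-- Partial derivative with respect to the second variable `v`. -/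
def pdv {X : Type*} [NormedAddCommGroup X] [NormedSpace ℝ X]
    (f : ℝ × ℝ → X) (p : ℝ × ℝ) : X := fderiv ℝ f p (0, 1)

/-- The wedge `x ∧ y ∧ z` of three vectors of `ℝ⁴`: the unique vector satisfying
`⟪x ∧ y ∧ z, w⟫ = det (x, y, z, w)` for all `w ∈ ℝ⁴`. -/
def wedge (x y z : E4) : E4 :=
  (WithLp.equiv 2 (Fin 4 → ℝ)).symm fun i =>
    Matrix.det (Matrix.of ![(x : Fin 4 → ℝ), y, z, fun j => if j = i then 1 else 0])

namespace Cycle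

/-- Coefficient `E` of the first fundamental form. -/
def Ec (α : ℝ × ℝ → E4) (p : ℝ × ℝ) : ℝ := ⟪pdu α p, pdu α p⟫
/-- Coefficient `F` of the first fundamental form. -/
def Fc (α : ℝ × ℝ → E4) (p : ℝ × ℝ) : ℝ := ⟪pdu α p, pdv α p⟫
/-- Coefficient `G` of the first fundamental form. -/
def Gc (α : ℝ × ℝ → E4) (p : ℝ × ℝ) : ℝ := ⟪pdv α p, pdv α p⟫

/-- `x₁ = ⟨α_u, t⟩`. -/
def x1 (α : ℝ × ℝ → E4) (t : ℝ → E4) (p : ℝ × ℝ) : ℝ := ⟪pdu α p, t p.1⟫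
/-- `x₂ = ⟨α_u, T⟩`. -/
def x2 (α : ℝ × ℝ → E4) (T : ℝ → E4) (p : ℝ × ℝ) : ℝ := ⟪pdu α p, T p.1⟫
/-- `x₃ = ⟨α_u, N⟩`. -/
def x3 (α : ℝ × ℝ → E4) (N : ℝ → E4) (p : ℝ × ℝ) : ℝ := ⟪pdu α p, N p.1⟫
/-- `y₁ = ⟨α_v, N⟩`. -/
def y1 (α : ℝ × ℝ → E4) (N : ℝ → E4) (p : ℝ × ℝ) : ℝ := ⟪pdv α p, N p.1⟫

/-- `B̄₁ = (y₁x₂ − x₃)t − x₁y₁T + x₁N`. -/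
def Bb1 (α : ℝ × ℝ → E4) (t T N : ℝ → E4) (p : ℝ × ℝ) : E4 :=
  (y1 α N p * x2 α T p - x3 α N p) • t p.1 - (x1 α t p * y1 α N p) • T p.1 + x1 α t p • N p.1

/-- `B̄₂ = α_u ∧ α_v ∧ B̄₁`. -/
def Bb2 (α : ℝ × ℝ → E4) (t T N : ℝ → E4) (p : ℝ × ℝ) : E4 :=
  wedge (pdu α p) (pdv α p) (Bb1 α t T N p)

/-- `N₁ = B̄₁/|B̄₁|`. -/
def N1 (α : ℝ × ℝ → E4) (t T N : ℝ → E4) (p : ℝ × ℝ) : E4 :=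
  ‖Bb1 α t T N p‖⁻¹ • Bb1 α t T N p

/-- `N₂ = B̄₂/|B̄₂|`. -/
def N2 (α : ℝ × ℝ → E4) (t T N : ℝ → E4) (p : ℝ × ℝ) : E4 :=
  ‖Bb2 α t T N p‖⁻¹ • Bb2 α t T N p

def e1 (α : ℝ × ℝ → E4) (t T N : ℝ → E4) (p : ℝ × ℝ) : ℝ := ⟪pdu (pdu α) p, N1 α t T N p⟫
def f1 (α : ℝ × ℝ → E4) (t T N : ℝ → E4) (p : ℝ × ℝ) : ℝ := ⟪pdv (pdu α) p, N1 α t T N p⟫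
def g1 (α : ℝ × ℝ → E4) (t T N : ℝ → E4) (p : ℝ × ℝ) : ℝ := ⟪pdv (pdv α) p, N1 α t T N p⟫
def e2 (α : ℝ × ℝ → E4) (t T N : ℝ → E4) (p : ℝ × ℝ) : ℝ := ⟪pdu (pdu α) p, N2 α t T N p⟫
def f2 (α : ℝ × ℝ → E4) (t T N : ℝ → E4) (p : ℝ × ℝ) : ℝ := ⟪pdv (pdu α) p, N2 α t T N p⟫
def g2 (α : ℝ × ℝ → E4) (t T N : ℝ → E4) (p : ℝ × ℝ) : ℝ := ⟪pdv (pdv α) p, N2 α t T N p⟫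

/-- `H̃₁ = (E g₁ − 2F f₁ + G e₁)/(2(EG − F²))`. -/
def Ht1 (α : ℝ × ℝ → E4) (t T N : ℝ → E4) (p : ℝ × ℝ) : ℝ :=
  (Ec α p * g1 α t T N p - 2 * Fc α p * f1 α t T N p + Gc α p * e1 α t T N p) /
    (2 * (Ec α p * Gc α p - Fc α p ^ 2))

/-- `H̃₂ = (E g₂ − 2F f₂ + G e₂)/(2(EG − F²))`. -/
def Ht2 (α : ℝ × ℝ → E4) (t T N : ℝ → E4) (p : ℝ × ℝ) : ℝ :=
  (Ec α p * g2 α t T N p - 2 * Fc α p * f2 α t T N p + Gc α p * e2 α t T N p) /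
    (2 * (Ec α p * Gc α p - Fc α p ^ 2))

/-- The mean curvature vector `H = H̃₁N₁ + H̃₂N₂`. -/
def Hvec (α : ℝ × ℝ → E4) (t T N : ℝ → E4) (p : ℝ × ℝ) : E4 :=
  Ht1 α t T N p • N1 α t T N p + Ht2 α t T N p • N2 α t T N p

def eH (α : ℝ × ℝ → E4) (t T N : ℝ → E4) (p : ℝ × ℝ) : ℝ := ⟪pdu (pdu α) p, Hvec α t T N p⟫
def fH (α : ℝ × ℝ → E4) (t T N : ℝ → E4) (p : ℝ × ℝ) : ℝ := ⟪pdv (pdu α) p, Hvec α t T N p⟫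
def gH (α : ℝ × ℝ → E4) (t T N : ℝ → E4) (p : ℝ × ℝ) : ℝ := ⟪pdv (pdv α) p, Hvec α t T N p⟫

end Cycle

open Cycle

section Slices

variable {X : Type*} [NormedAddCommGroup X] [NormedSpace ℝ X]

/-- For differentiable `f`, `pdu f` is the one-variable derivative of `f` along horizontal lines. -/
lemma hasDerivAt_slice_fst {f : ℝ × ℝ → X} (hf : Differentiable ℝ f) (u v : ℝ) :
    HasDerivAt (fun s => f (s, v)) (pdu f (u, v)) u :=
  (hf (u, v)).hasFDerivAt.comp_hasDerivAt u ((hasDerivAt_id u).prodMk (hasDerivAt_const u v))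

/-- For differentiable `f`, `pdv f` is the one-variable derivative of `f` along vertical lines. -/
lemma hasDerivAt_slice_snd {f : ℝ × ℝ → X} (hf : Differentiable ℝ f) (u v : ℝ) :
    HasDerivAt (fun s => f (u, s)) (pdv f (u, v)) v :=
  (hf (u, v)).hasFDerivAt.comp_hasDerivAt v ((hasDerivAt_const v u).prodMk (hasDerivAt_id v))

lemma contDiff_pdu {f : ℝ × ℝ → X} (hf : ContDiff ℝ (⊤ : ℕ∞) f) :
    ContDiff ℝ (⊤ : ℕ∞) (pdu f) :=
  (hf.fderiv_right (m := (⊤ : ℕ∞)) (by simp)).clm_apply contDiff_const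

lemma contDiff_pdv {f : ℝ × ℝ → X} (hf : ContDiff ℝ (⊤ : ℕ∞) f) :
    ContDiff ℝ (⊤ : ℕ∞) (pdv f) :=
  (hf.fderiv_right (m := (⊤ : ℕ∞)) (by simp)).clm_apply contDiff_const

lemma pdu_expansion {c T : ℝ → X} {W α : ℝ × ℝ → X} (hc : Differentiable ℝ c)
    (hT : Differentiable ℝ T) (hW : Differentiable ℝ W) (hα' : Differentiable ℝ α)
    (hα : ∀ u v, α (u, v) = c u + v • T u + v ^ 2 • W (u, v)) (u v : ℝ) :
    pdu α (u, v) = deriv c u + v • deriv T u + v ^ 2 • pdu W (u, v) := by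
  refine (hasDerivAt_slice_fst hα' u v).unique ?_
  simp only [hα]
  exact ((hc u).hasDerivAt.add ((hT u).hasDerivAt.const_smul v)).add
    ((hasDerivAt_slice_fst hW u v).const_smul (v ^ 2))

lemma pdv_expansion {c T : ℝ → X} {W α : ℝ × ℝ → X}
    (hW : Differentiable ℝ W) (hα' : Differentiable ℝ α)
    (hα : ∀ u v, α (u, v) = c u + v • T u + v ^ 2 • W (u, v)) (u v : ℝ) :
    pdv α (u, v) = T u + (2 * v) • W (u, v) + v ^ 2 • pdv W (u, v) := by
  refine (hasDerivAt_slice_snd hα' u v).unique ?_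
  simp only [hα]
  have h := (((hasDerivAt_id v).smul_const (T u)).const_add (c u)).add
    ((hasDerivAt_pow 2 v).smul (hasDerivAt_slice_snd hW u v))
  refine HasDerivAt.congr_deriv h ?_
  simp
  abel

/-- A curve `v ↦ x + v y + v² Z(v)` has velocity `y` at `v = 0`. -/
lemma hasDerivAt_zero_of_expansion (x y : X) {Z : ℝ → X} (hZ : Differentiable ℝ Z) :
    HasDerivAt (fun v : ℝ => x + v • y + v ^ 2 • Z v) y 0 := by
  have h := (((hasDerivAt_id (0 : ℝ)).smul_const y).const_add x).add
    ((hasDerivAt_pow 2 (0 : ℝ)).smul (hZ 0).hasDerivAt)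
  exact HasDerivAt.congr_deriv h (by simp)

end Slices

/-- first fundamental form along the cycle chart:
`E(u,0) = G(u,0) = 1`, `F(u,0) = 0`, `E_v(u,0) = −2k_g(u)`, `F_v(u,0) = G_v(u,0) = 0`. -/
theorem stmt10
    (L : ℝ) (hL : 0 < L)
    (t T N B c : ℝ → E4) (kg k kB τN τ τB K Kb a b : ℝ → ℝ) (A Ab : ℝ × ℝ → ℝ)
    (htsm : ContDiff ℝ (⊤ : ℕ∞) t) (hTsm : ContDiff ℝ (⊤ : ℕ∞) T) (hNsm : ContDiff ℝ (⊤ : ℕ∞) N)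
    (hBsm : ContDiff ℝ (⊤ : ℕ∞) B) (hcsm : ContDiff ℝ (⊤ : ℕ∞) c)
    (hkgsm : ContDiff ℝ (⊤ : ℕ∞) kg) (hksm : ContDiff ℝ (⊤ : ℕ∞) k) (hkBsm : ContDiff ℝ (⊤ : ℕ∞) kB)
    (hτNsm : ContDiff ℝ (⊤ : ℕ∞) τN) (hτsm : ContDiff ℝ (⊤ : ℕ∞) τ) (hτBsm : ContDiff ℝ (⊤ : ℕ∞) τB)
    (hKsm : ContDiff ℝ (⊤ : ℕ∞) K) (hKbsm : ContDiff ℝ (⊤ : ℕ∞) Kb) (hasm : ContDiff ℝ (⊤ : ℕ∞) a)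
    (hbsm : ContDiff ℝ (⊤ : ℕ∞) b) (hAsm : ContDiff ℝ (⊤ : ℕ∞) A) (hAbsm : ContDiff ℝ (⊤ : ℕ∞) Ab)
    (htper : Function.Periodic t L) (hTper : Function.Periodic T L)
    (hNper : Function.Periodic N L) (hBper : Function.Periodic B L)
    (hcper : Function.Periodic c L)
    (hkgper : Function.Periodic kg L) (hkper : Function.Periodic k L)
    (hkBper : Function.Periodic kB L) (hτNper : Function.Periodic τN L)
    (hτper : Function.Periodic τ L) (hτBper : Function.Periodic τB L)
    (hKper : Function.Periodic K L) (hKbper : Function.Periodic Kb L)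
    (haper : Function.Periodic a L) (hbper : Function.Periodic b L)
    (hAper : ∀ u v : ℝ, A (u + L, v) = A (u, v)) (hAbper : ∀ u v : ℝ, Ab (u + L, v) = Ab (u, v))
    (hortho : ∀ u : ℝ, ⟪t u, t u⟫ = 1 ∧ ⟪T u, T u⟫ = 1 ∧ ⟪N u, N u⟫ = 1 ∧
      ⟪B u, B u⟫ = 1 ∧ ⟪t u, T u⟫ = 0 ∧ ⟪t u, N u⟫ = 0 ∧ ⟪t u, B u⟫ = 0 ∧
      ⟪T u, N u⟫ = 0 ∧ ⟪T u, B u⟫ = 0 ∧ ⟪N u, B u⟫ = 0)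
    (hdet : ∀ u : ℝ, Matrix.det (Matrix.of ![(t u : Fin 4 → ℝ), T u, N u, B u]) = 1)
    (hDt : ∀ u : ℝ, deriv t u = kg u • T u + k u • N u + kB u • B u)
    (hDT : ∀ u : ℝ, deriv T u = -(kg u) • t u - τN u • N u - τ u • B u)
    (hDN : ∀ u : ℝ, deriv N u = -(k u) • t u + τN u • T u + τB u • B u)
    (hDB : ∀ u : ℝ, deriv B u = -(kB u) • t u + τ u • T u - τB u • N u)
    (hct : ∀ u : ℝ, deriv c u = t u)
    (hA0 : ∀ u : ℝ, A (u, 0) = 0) (hAb0 : ∀ u : ℝ, Ab (u, 0) = 0)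
    (α : ℝ × ℝ → E4)
    (hα : ∀ u v : ℝ, α (u, v) = c u + v • T u +
      (K u * v ^ 2 / 2 + a u * v ^ 3 / 6 + v ^ 3 * A (u, v)) • N u +
      (Kb u * v ^ 2 / 2 + b u * v ^ 3 / 6 + v ^ 3 * Ab (u, v)) • B u) :
    ∀ u : ℝ,
      Ec α (u, 0) = 1 ∧ Fc α (u, 0) = 0 ∧ Gc α (u, 0) = 1 ∧
      pdv (Ec α) (u, 0) = -2 * kg u ∧ pdv (Fc α) (u, 0) = 0 ∧ pdv (Gc α) (u, 0) = 0 := by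
  -- `W` is abstracted so that it stays folded in the derivative computations.
  obtain ⟨W, hW⟩ : ∃ W : ℝ × ℝ → E4, W = fun p =>
      (K p.1 / 2 + a p.1 * p.2 / 6 + p.2 * A p) • N p.1 +
      (Kb p.1 / 2 + b p.1 * p.2 / 6 + p.2 * Ab p) • B p.1 := ⟨_, rfl⟩
  have hWsm : ContDiff ℝ (⊤ : ℕ∞) W := by rw [hW]; fun_prop
  have hαW : ∀ u v, α (u, v) = c u + v • T u + v ^ 2 • W (u, v) := by
    intro u v
    rw [hα, hW]
    module
  have hαsm : ContDiff ℝ (⊤ : ℕ∞) α := by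
    have : α = fun p => c p.1 + p.2 • T p.1 + p.2 ^ 2 • W p := funext fun p => hαW p.1 p.2
    rw [this]
    fun_prop
  have hne : ((⊤ : ℕ∞) : WithTop ℕ∞) ≠ 0 := by simp
  have hWd := hWsm.differentiable hne
  have hαd := hαsm.differentiable hne
  have hu := contDiff_pdu hαsm
  have hv := contDiff_pdv hαsm
  have hα_u := pdu_expansion (hcsm.differentiable hne) (hTsm.differentiable hne) hWd hαd hαW
  have hα_v := pdv_expansion hWd hαd hαW
  intro u
  obtain ⟨htt, hTT, -, -, htT, htN, htB, hTN, hTB, -⟩ := hortho u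
  have hu0 : pdu α (u, 0) = t u := by simp [hα_u, hct]
  have hv0 : pdv α (u, 0) = T u := by simp [hα_v]
  have hslice : Differentiable ℝ (fun v : ℝ => ((u, v) : ℝ × ℝ)) := by fun_prop
  have huv : HasDerivAt (fun v => pdu α (u, v)) (deriv T u) 0 := by
    simp only [hα_u]
    exact hasDerivAt_zero_of_expansion _ _
      (((contDiff_pdu hWsm).differentiable hne).comp hslice)
  have hvv : HasDerivAt (fun v => pdv α (u, v)) ((2 : ℝ) • W (u, 0)) 0 := by
    have h1 : HasDerivAt (fun v : ℝ => (2 * v) • W (u, v)) ((2 : ℝ) • W (u, 0)) 0 := by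
      have h := ((hasDerivAt_id (0 : ℝ)).const_mul 2).smul (hasDerivAt_slice_snd hWd u 0)
      exact HasDerivAt.congr_deriv h (by simp)
    -- The remaining terms `T u + v² W_v` have no linear part, hence velocity `0`.
    have h2 := hasDerivAt_zero_of_expansion (T u) (0 : E4)
      (((contDiff_pdv hWsm).differentiable hne).comp hslice)
    have hfun : (fun v => pdv α (u, v)) =
        (fun v : ℝ => T u + v • (0 : E4) + v ^ 2 • pdv W (u, v)) +
          fun v : ℝ => (2 * v) • W (u, v) := by
      funext v
      simp only [hα_v, Pi.add_apply, smul_zero, add_zero]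
      abel
    rw [hfun]
    exact HasDerivAt.congr_deriv (HasDerivAt.add h2 h1) (zero_add _)
  have htT' : ⟪t u, deriv T u⟫ = -kg u := by
    simp [hDT, inner_sub_right, inner_smul_right, htt, htN, htB, -inner_self_eq_norm_sq_to_K]
  have hTT' : ⟪deriv T u, T u⟫ = 0 := by
    rw [real_inner_comm]
    simp only [hDT, inner_sub_right, inner_smul_right, real_inner_comm (t u) (T u), htT, hTN, hTB]
    simp
  have htW : ⟪t u, W (u, 0)⟫ = 0 := by
    simp [hW, inner_add_right, inner_smul_right, htN, htB]
  have hTW : ⟪T u, W (u, 0)⟫ = 0 := by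
    simp [hW, inner_add_right, inner_smul_right, hTN, hTB]
  have hE : Differentiable ℝ (Ec α) := (hu.inner ℝ hu).differentiable hne
  have hF : Differentiable ℝ (Fc α) := (hu.inner ℝ hv).differentiable hne
  have hG : Differentiable ℝ (Gc α) := (hv.inner ℝ hv).differentiable hne
  refine ⟨?_, ?_, ?_, ?_, ?_, ?_⟩
  · rw [Ec, hu0, htt]
  · rw [Fc, hu0, hv0, htT]
  · rw [Gc, hv0, hTT]
  · rw [(hasDerivAt_slice_snd hE u 0).unique (huv.inner ℝ huv), hu0,
      real_inner_comm (t u) (deriv T u), htT']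
    ring
  · rw [(hasDerivAt_slice_snd hF u 0).unique (huv.inner ℝ hvv), hu0, hv0,
      inner_smul_right, htW, hTT']
    ring
  · rw [(hasDerivAt_slice_snd hG u 0).unique (hvv.inner ℝ hvv), hv0,
      real_inner_comm (T u) ((2 : ℝ) • W (u, 0)), inner_smul_right, hTW]
    ring
end
end

section
/- Along the cycle chart, the v-derivatives at v = 0 of the second fundamental form coefficients relative to N₁ satisfy, for every u: ∂e₁/∂v(u,0) = −k_g(u)(k(u) + K(u)) + τ(u)τ_B(u) − τ_N'(u), ∂f₁/∂v(u,0) = K'(u) − K̄(u)τ_B(u) − k_g(u)τ_N(u), and ∂g₁/∂v(u,0) = a(u). -/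
/-! The three coefficients are inner products of a second derivative of `α` with `N₁`, so their
`v`-derivatives at `v = 0` follow from the product rule once two first-order expansions are known.

* Mixed partials of the smooth map `α` commute, so `∂_v α_uu`, `∂_v α_uv`, `∂_v α_vv` on the curve
  `v = 0` are `u`-derivatives of `α_v`, `α_vv`, `α_vvv` there. Taylor expansion of `α` in `v` gives
  `α_v(u,0) = T`, `α_vv(u,0) = K N + K̄ B` and `α_vvv(u,0) = a N + b B`; the remainder terms
  `v³A`, `v³Ā` do not contribute since `A` and `Ā` vanish at `v = 0` (`taylor_v`).
* The Darboux equations give `B̄₁ = N + v (τ_N t − K T − k_g N) + O(v²)`, and normalising removes the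
  component along `N` (`hasDerivAt_normalize`), so `N₁ = N + v (τ_N t − K T) + O(v²)`.
-/

noncomputable section

open scoped RealInnerProductSpace

open Cycle

/-! ### Partial derivatives of smooth maps on the plane -/

section Partials

variable {X : Type*} [NormedAddCommGroup X] [NormedSpace ℝ X]

lemma hasDerivAt_slice_v {f : ℝ × ℝ → X} {u v : ℝ} (hf : DifferentiableAt ℝ f (u, v)) :
    HasDerivAt (fun s => f (u, s)) (pdv f (u, v)) v :=
  hf.hasFDerivAt.comp_hasDerivAt v ((hasDerivAt_const v u).prodMk (hasDerivAt_id v))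

lemma hasDerivAt_slice_u {f : ℝ × ℝ → X} {u v : ℝ} (hf : DifferentiableAt ℝ f (u, v)) :
    HasDerivAt (fun s => f (s, v)) (pdu f (u, v)) u :=
  hf.hasFDerivAt.comp_hasDerivAt u
    (f := fun s => (s, v)) ((hasDerivAt_id u).prodMk (hasDerivAt_const u v))

/-- Equality of mixed partial derivatives of a smooth map. -/
lemma pdv_pdu_comm {f : ℝ × ℝ → X} (hf : ContDiff ℝ (⊤ : ℕ∞) f) :
    pdv (pdu f) = pdu (pdv f) := by
  funext p
  have hd : DifferentiableAt ℝ (fderiv ℝ f) p :=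
    (hf.fderiv_right (m := (⊤ : ℕ∞)) (by simp)).differentiable (by simp) p
  have hsymm : IsSymmSndFDerivAt ℝ f p :=
    hf.contDiffAt.isSymmSndFDerivAt (by
      simp only [minSmoothness_of_isRCLikeNormedField]
      exact WithTop.coe_le_coe.2 (le_top (a := (2 : ℕ∞))))
  have key : ∀ x y : ℝ × ℝ, fderiv ℝ (fun q => fderiv ℝ f q x) p y
      = fderiv ℝ (fderiv ℝ f) p y x := by
    intro x y
    rw [fderiv_clm_apply hd (differentiableAt_const x)]
    simp
  change fderiv ℝ (fun q => fderiv ℝ f q (1, 0)) p (0, 1)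
    = fderiv ℝ (fun q => fderiv ℝ f q (0, 1)) p (1, 0)
  rw [key, key]
  exact hsymm _ _

/-- The `v`-derivatives at `v = 0`, up to order three, of a smooth map given by a third-order
Taylor polynomial in `v` with remainder `v³R`, where `R(u,0) = 0`. -/
lemma taylor_v {f R : ℝ × ℝ → X} {c T P Q : ℝ → X} (hf : ContDiff ℝ (⊤ : ℕ∞) f)
    (hR : ContDiff ℝ (⊤ : ℕ∞) R) (hR0 : ∀ u, R (u, 0) = 0)
    (h : ∀ u v, f (u, v) = c u + v • T u + (v ^ 2 / 2) • P u + (v ^ 3 / 6) • Q u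
      + v ^ 3 • R (u, v)) (u : ℝ) :
    pdv f (u, 0) = T u ∧ pdv (pdv f) (u, 0) = P u ∧ pdv (pdv (pdv f)) (u, 0) = Q u := by
  have dif : ∀ {g : ℝ × ℝ → X}, ContDiff ℝ (⊤ : ℕ∞) g → ∀ p, DifferentiableAt ℝ g p :=
    fun hg p => hg.differentiable (by simp) p
  have hRv := contDiff_pdv hR
  have hRvv := contDiff_pdv hRv
  have pw : ∀ (n : ℕ) (v : ℝ), HasDerivAt (fun s : ℝ => s ^ n) (n * v ^ (n - 1)) v :=
    fun n v => hasDerivAt_pow n v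
  have h1 : ∀ v, pdv f (u, v) = T u + v • P u + (v ^ 2 / 2) • Q u + (3 * v ^ 2) • R (u, v)
      + v ^ 3 • pdv R (u, v) := by
    intro v
    have e : (fun s => f (u, s)) = _ := funext (h u)
    have d := hasDerivAt_slice_v (dif hf (u, v))
    rw [e] at d
    refine d.unique (HasDerivAt.congr_deriv (
      ((((hasDerivAt_const v (c u)).add ((hasDerivAt_id v).smul_const (T u))).add
      (((pw 2 v).div_const 2).smul_const (P u))).add (((pw 3 v).div_const 6).smul_const (Q u))).add
      ((pw 3 v).smul (hasDerivAt_slice_v (dif hR (u, v))))) ?_)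
    simp only [Nat.cast_ofNat, Nat.add_one_sub_one]
    module
  have h2 : ∀ v, pdv (pdv f) (u, v) = P u + v • Q u + (6 * v) • R (u, v)
      + (6 * v ^ 2) • pdv R (u, v) + v ^ 3 • pdv (pdv R) (u, v) := by
    intro v
    have e : (fun s => pdv f (u, s)) = _ := funext h1
    have d := hasDerivAt_slice_v (dif (contDiff_pdv hf) (u, v))
    rw [e] at d
    refine d.unique (HasDerivAt.congr_deriv (
      ((((hasDerivAt_const v (T u)).add ((hasDerivAt_id v).smul_const (P u))).add
      (((pw 2 v).div_const 2).smul_const (Q u))).add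
      (((pw 2 v).const_mul 3).smul (hasDerivAt_slice_v (dif hR (u, v))))).add
      ((pw 3 v).smul (hasDerivAt_slice_v (dif hRv (u, v))))) ?_)
    simp only [Nat.cast_ofNat, Nat.add_one_sub_one]
    module
  refine ⟨by simp [h1], by simp [h2], ?_⟩
  have e : (fun s => pdv (pdv f) (u, s)) = _ := funext h2
  have d := hasDerivAt_slice_v (dif (contDiff_pdv (contDiff_pdv hf)) (u, 0))
  rw [e] at d
  refine d.unique (HasDerivAt.congr_deriv (
    ((((hasDerivAt_const 0 (P u)).add ((hasDerivAt_id 0).smul_const (Q u))).add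
    (((hasDerivAt_id (0 : ℝ)).const_mul 6).smul (hasDerivAt_slice_v (dif hR (u, 0))))).add
    (((pw 2 0).const_mul 6).smul (hasDerivAt_slice_v (dif hRv (u, 0))))).add
    ((pw 3 0).smul (hasDerivAt_slice_v (dif hRvv (u, 0))))) ?_)
  simp [hR0]

end Partials

/-! ### The unit normal field and the three coefficients -/

/-- Normalising a curve through a unit vector projects its velocity off that vector. -/
lemma hasDerivAt_normalize {β : ℝ → E4} {β' : E4} {s : ℝ} (h : HasDerivAt β β' s)
    (h1 : ⟪β s, β s⟫ = 1) :
    HasDerivAt (fun v => ‖β v‖⁻¹ • β v) (β' - ⟪β s, β'⟫ • β s) s := by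
  have hn : ‖β s‖ = 1 := by
    rw [norm_eq_sqrt_real_inner, h1, Real.sqrt_one]
  have hs : HasDerivAt (fun v => ‖β v‖) ⟪β s, β'⟫ s := by
    have := h.norm_sq.sqrt (by simp [hn])
    simp only [Real.sqrt_sq (norm_nonneg _), hn] at this
    convert this using 1
    ring
  have := (hs.inv (by simp [hn])).smul h
  refine this.congr_deriv ?_
  simp only [Pi.inv_apply, hn]
  module

/-- `v`-derivatives at `v = 0` of the second fundamental form coefficients
relative to `N₁`: `(e₁)_v = −k_g(k + K) + ττ_B − τ_N'`, `(f₁)_v = K' − K̄τ_B − k_gτ_N`,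
`(g₁)_v = a`. -/
theorem stmt13
    (L : ℝ) (hL : 0 < L)
    (t T N B c : ℝ → E4) (kg k kB τN τ τB K Kb a b : ℝ → ℝ) (A Ab : ℝ × ℝ → ℝ)
    (htsm : ContDiff ℝ (⊤ : ℕ∞) t) (hTsm : ContDiff ℝ (⊤ : ℕ∞) T) (hNsm : ContDiff ℝ (⊤ : ℕ∞) N)
    (hBsm : ContDiff ℝ (⊤ : ℕ∞) B) (hcsm : ContDiff ℝ (⊤ : ℕ∞) c)
    (hkgsm : ContDiff ℝ (⊤ : ℕ∞) kg) (hksm : ContDiff ℝ (⊤ : ℕ∞) k) (hkBsm : ContDiff ℝ (⊤ : ℕ∞) kB)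
    (hτNsm : ContDiff ℝ (⊤ : ℕ∞) τN) (hτsm : ContDiff ℝ (⊤ : ℕ∞) τ) (hτBsm : ContDiff ℝ (⊤ : ℕ∞) τB)
    (hKsm : ContDiff ℝ (⊤ : ℕ∞) K) (hKbsm : ContDiff ℝ (⊤ : ℕ∞) Kb) (hasm : ContDiff ℝ (⊤ : ℕ∞) a)
    (hbsm : ContDiff ℝ (⊤ : ℕ∞) b) (hAsm : ContDiff ℝ (⊤ : ℕ∞) A) (hAbsm : ContDiff ℝ (⊤ : ℕ∞) Ab)
    (htper : Function.Periodic t L) (hTper : Function.Periodic T L)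
    (hNper : Function.Periodic N L) (hBper : Function.Periodic B L)
    (hcper : Function.Periodic c L)
    (hkgper : Function.Periodic kg L) (hkper : Function.Periodic k L)
    (hkBper : Function.Periodic kB L) (hτNper : Function.Periodic τN L)
    (hτper : Function.Periodic τ L) (hτBper : Function.Periodic τB L)
    (hKper : Function.Periodic K L) (hKbper : Function.Periodic Kb L)
    (haper : Function.Periodic a L) (hbper : Function.Periodic b L)
    (hAper : ∀ u v : ℝ, A (u + L, v) = A (u, v)) (hAbper : ∀ u v : ℝ, Ab (u + L, v) = Ab (u, v))
    (hortho : ∀ u : ℝ, ⟪t u, t u⟫ = 1 ∧ ⟪T u, T u⟫ = 1 ∧ ⟪N u, N u⟫ = 1 ∧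
      ⟪B u, B u⟫ = 1 ∧ ⟪t u, T u⟫ = 0 ∧ ⟪t u, N u⟫ = 0 ∧ ⟪t u, B u⟫ = 0 ∧
      ⟪T u, N u⟫ = 0 ∧ ⟪T u, B u⟫ = 0 ∧ ⟪N u, B u⟫ = 0)
    (hdet : ∀ u : ℝ, Matrix.det (Matrix.of ![(t u : Fin 4 → ℝ), T u, N u, B u]) = 1)
    (hDt : ∀ u : ℝ, deriv t u = kg u • T u + k u • N u + kB u • B u)
    (hDT : ∀ u : ℝ, deriv T u = -(kg u) • t u - τN u • N u - τ u • B u)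
    (hDN : ∀ u : ℝ, deriv N u = -(k u) • t u + τN u • T u + τB u • B u)
    (hDB : ∀ u : ℝ, deriv B u = -(kB u) • t u + τ u • T u - τB u • N u)
    (hct : ∀ u : ℝ, deriv c u = t u)
    (hA0 : ∀ u : ℝ, A (u, 0) = 0) (hAb0 : ∀ u : ℝ, Ab (u, 0) = 0)
    (α : ℝ × ℝ → E4)
    (hα : ∀ u v : ℝ, α (u, v) = c u + v • T u +
      (K u * v ^ 2 / 2 + a u * v ^ 3 / 6 + v ^ 3 * A (u, v)) • N u +
      (Kb u * v ^ 2 / 2 + b u * v ^ 3 / 6 + v ^ 3 * Ab (u, v)) • B u) :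
    ∀ u : ℝ,
      pdv (e1 α t T N) (u, 0) = -kg u * (k u + K u) + τ u * τB u - deriv τN u ∧
      pdv (f1 α t T N) (u, 0) = deriv K u - Kb u * τB u - kg u * τN u ∧
      pdv (g1 α t T N) (u, 0) = a u := by
  intro u
  have dif : ∀ {g : ℝ × ℝ → E4}, ContDiff ℝ (⊤ : ℕ∞) g → ∀ p, DifferentiableAt ℝ g p :=
    fun hg p => hg.differentiable (by simp) p
  have hαsm : ContDiff ℝ (⊤ : ℕ∞) α := by
    have : α = fun p : ℝ × ℝ => c p.1 + p.2 • T p.1 +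
      (K p.1 * p.2 ^ 2 / 2 + a p.1 * p.2 ^ 3 / 6 + p.2 ^ 3 * A p) • N p.1 +
      (Kb p.1 * p.2 ^ 2 / 2 + b p.1 * p.2 ^ 3 / 6 + p.2 ^ 3 * Ab p) • B p.1 := by
      funext p; exact hα p.1 p.2
    rw [this]
    fun_prop
  have hu := contDiff_pdu hαsm
  have hv := contDiff_pdv hαsm
  have huu := contDiff_pdu hu
  have huv := contDiff_pdv hu
  have hvv := contDiff_pdv hv
  have tay := taylor_v (R := fun p => A p • N p.1 + Ab p • B p.1) (c := c) (T := T)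
    (P := fun u => K u • N u + Kb u • B u) (Q := fun u => a u • N u + b u • B u)
    hαsm (by fun_prop) (by intro u; simp [hA0, hAb0])
    (by intro u v; rw [hα]; module)
  have dt : ∀ {f : ℝ → E4}, ContDiff ℝ (⊤ : ℕ∞) f → ∀ s, HasDerivAt f (deriv f s) s :=
    fun hf s => (hf.differentiable (by simp) s).hasDerivAt
  have ds : ∀ {f : ℝ → ℝ}, ContDiff ℝ (⊤ : ℕ∞) f → ∀ s, HasDerivAt f (deriv f s) s :=
    fun hf s => (hf.differentiable (by simp) s).hasDerivAt
  -- Values on the curve `v = 0` of the first and second derivatives of `α`.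
  have Vu : ∀ s, pdu α (s, 0) = t s := by
    intro s
    have d := hasDerivAt_slice_u (dif hαsm (s, 0))
    have e : (fun r => α (r, 0)) = c := by funext r; simp [hα]
    rw [e] at d
    rw [← hct]; exact d.deriv.symm
  have Vuu : pdu (pdu α) (u, 0) = deriv t u := by
    have d := hasDerivAt_slice_u (dif hu (u, 0))
    rw [funext Vu] at d
    exact d.deriv.symm
  have Vuv : ∀ s, pdv (pdu α) (s, 0) = deriv T s := by
    intro s
    rw [pdv_pdu_comm hαsm]
    have d := hasDerivAt_slice_u (dif hv (s, 0))
    rw [funext fun r => (tay r).1] at d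
    exact d.deriv.symm
  have Vvv := (tay u).2.1
  -- Third derivatives, with one `v`-derivative moved inside.
  have Wuuv : pdv (pdu (pdu α)) (u, 0) = deriv (deriv T) u := by
    rw [pdv_pdu_comm hu]
    have d := hasDerivAt_slice_u (dif huv (u, 0))
    rw [funext Vuv] at d
    exact d.deriv.symm
  have Wuvv : pdv (pdv (pdu α)) (u, 0)
      = deriv K u • N u + K u • deriv N u + (deriv Kb u • B u + Kb u • deriv B u) := by
    rw [pdv_pdu_comm hαsm, pdv_pdu_comm hv]
    have d := hasDerivAt_slice_u (dif hvv (u, 0))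
    rw [funext fun r => (tay r).2.1] at d
    refine d.unique (HasDerivAt.congr_deriv (
      ((ds hKsm u).smul (dt hNsm u)).add ((ds hKbsm u).smul (dt hBsm u))) ?_)
    module
  have Wvvv := (tay u).2.2
  have hT2 : deriv (deriv T) u = -(deriv kg u • t u + kg u • deriv t u)
      - (deriv τN u • N u + τN u • deriv N u) - (deriv τ u • B u + τ u • deriv B u) := by
    rw [funext hDT]
    refine HasDerivAt.deriv (HasDerivAt.congr_deriv (((((ds hkgsm u).neg).smul (dt htsm u)).sub ((ds hτNsm u).smul (dt hNsm u))).sub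
      ((ds hτsm u).smul (dt hBsm u))) ?_)
    simp only [Pi.neg_apply]
    module
  obtain ⟨tt, TT, NN, BB, tT, tN, tB, TN, TB, NB⟩ := hortho u
  have Tt : ⟪T u, t u⟫ = 0 := by rw [real_inner_comm]; exact tT
  have Nt : ⟪N u, t u⟫ = 0 := by rw [real_inner_comm]; exact tN
  have Bt : ⟪B u, t u⟫ = 0 := by rw [real_inner_comm]; exact tB
  have NT : ⟪N u, T u⟫ = 0 := by rw [real_inner_comm]; exact TN
  have BT : ⟪B u, T u⟫ = 0 := by rw [real_inner_comm]; exact TB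
  have BN : ⟪B u, N u⟫ = 0 := by rw [real_inner_comm]; exact NB
  -- First-order expansion of `B̄₁` along `v`.
  have hBval : Bb1 α t T N (u, 0) = N u := by
    simp only [Bb1, x1, x2, x3, y1, Vu, (tay u).1, tt, tT, tN, TN]
    module
  have hBder : HasDerivAt (fun v => Bb1 α t T N (u, v))
      (τN u • t u - K u • T u - kg u • N u) 0 := by
    have du := hasDerivAt_slice_v (dif hu (u, 0))
    have dv := hasDerivAt_slice_v (dif hv (u, 0))
    rw [Vuv, hDT] at du
    rw [Vvv] at dv
    have dx1 := du.inner ℝ (hasDerivAt_const 0 (t u))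
    have dx2 := du.inner ℝ (hasDerivAt_const 0 (T u))
    have dx3 := du.inner ℝ (hasDerivAt_const 0 (N u))
    have dy1 := dv.inner ℝ (hasDerivAt_const 0 (N u))
    refine HasDerivAt.congr_deriv (((((dy1.mul dx2).sub dx3).smul_const (t u)).sub
      ((dx1.mul dy1).smul_const (T u))).add (dx1.smul_const (N u))) ?_
    simp only [Vu, (tay u).1, inner_add_left, inner_sub_left, real_inner_smul_left,
      inner_zero_right, inner_neg_left, neg_smul,
      tt, NN, tT, tN, TN, Nt, Bt, NT, BT, BN]
    module
  have hNval : N1 α t T N (u, 0) = N u := by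
    have hn : ‖N u‖ = 1 := by rw [norm_eq_sqrt_real_inner, NN, Real.sqrt_one]
    simp [N1, hBval, hn]
  have hNder : HasDerivAt (fun v => N1 α t T N (u, v)) (τN u • t u - K u • T u) 0 := by
    have := hasDerivAt_normalize hBder (by rw [hBval]; exact NN)
    refine this.congr_deriv ?_
    simp only [hBval, inner_sub_right, real_inner_smul_right, NN, Nt, NT]
    module
  have hBdiff : DifferentiableAt ℝ (Bb1 α t T N) (u, 0) := by
    have : ContDiff ℝ (⊤ : ℕ∞) (Bb1 α t T N) := by
      have hx1 : ContDiff ℝ (⊤ : ℕ∞) (x1 α t) := hu.inner ℝ (htsm.comp contDiff_fst)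
      have hx2 : ContDiff ℝ (⊤ : ℕ∞) (x2 α T) := hu.inner ℝ (hTsm.comp contDiff_fst)
      have hx3 : ContDiff ℝ (⊤ : ℕ∞) (x3 α N) := hu.inner ℝ (hNsm.comp contDiff_fst)
      have hy1 : ContDiff ℝ (⊤ : ℕ∞) (y1 α N) := hv.inner ℝ (hNsm.comp contDiff_fst)
      unfold Bb1
      fun_prop
    exact dif this _
  have hNdiff : DifferentiableAt ℝ (N1 α t T N) (u, 0) := by
    have hne : Bb1 α t T N (u, 0) ≠ 0 := by
      rw [hBval]; intro h; simp [h] at NN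
    exact ((hBdiff.norm ℝ hne).inv (norm_ne_zero_iff.mpr hne)).smul hBdiff
  -- Product rule for the inner product of a smooth map with `N₁`.
  have main : ∀ {f : ℝ × ℝ → E4}, ContDiff ℝ (⊤ : ℕ∞) f →
      pdv (fun p => ⟪f p, N1 α t T N p⟫) (u, 0)
        = ⟪f (u, 0), τN u • t u - K u • T u⟫ + ⟪pdv f (u, 0), N u⟫ := by
    intro f hf
    have d := (hasDerivAt_slice_v (dif hf (u, 0))).inner ℝ hNder
    rw [hNval] at d
    exact (hasDerivAt_slice_v ((dif hf (u, 0)).inner ℝ hNdiff)).unique d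
  refine ⟨(main huu).trans ?_, (main huv).trans ?_, (main hvv).trans ?_⟩
  · rw [Vuu, Wuuv, hT2, hDt, hDN, hDB]
    simp only [inner_add_left, inner_sub_left, inner_sub_right, real_inner_smul_left,
      real_inner_smul_right, inner_neg_left, neg_smul, smul_add, smul_sub, smul_neg,
      tt, TT, NN, BB, tT, tN, tB, TN, TB, NB, Tt, Nt, Bt, NT, BT, BN]
    ring
  · rw [Vuv, Wuvv, hDT, hDN, hDB]
    simp only [inner_add_left, inner_sub_left, inner_sub_right, real_inner_smul_left,
      real_inner_smul_right, inner_neg_left, neg_smul, smul_add, smul_sub, smul_neg,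
      tt, TT, NN, BB, tT, tN, tB, TN, TB, NB, Tt, Nt, Bt, NT, BT, BN]
    ring
  · rw [Vvv, Wvvv]
    simp only [inner_add_left, inner_sub_right, real_inner_smul_left, real_inner_smul_right,
      NN, Nt, Bt, NT, BT, BN]
    ring
end
end
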